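/- If |X| ≥ 3, the lexicographic excellence solution R^L does not satisfy independence of non-unanimous improvements (INUI): there exist ≿ ∈ ℛ(𝔛) with classes Σ_1 ≻ ⋯ ≻ Σ_l, an index k, Δ ⊆ Σ_k and x, y ∈ X with x, y ∉ ⋂Δ such that the restrictions to {x, y} of R^L_≿ and R^L_{≿'} differ, where ≿' : Σ_1 ≻' ⋯ ≻' Σ_{k−1} ≻' Δ ≻' Σ_k ∖ Δ ≻' ⋯ ≻' Σ_l. -/

import Mathlib

/-!
Social ranking solutions (SRSs).  The set of individuals is a finite type `X`;
coalitions are elements of `Finset X` (so the domain of a power relation is the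
whole power set `𝔛 = 2^X`).  A weak order `≿ ∈ ℛ(𝔛)` is encoded as a relation
`r : Finset X → Finset X → Prop` together with (when needed) its list of
equivalence classes `L = [Σ₁, …, Σ_l]` in strictly decreasing order
(`IsClassList r L`).
-/

namespace SocialRanking

variable {X : Type*} [Fintype X] [DecidableEq X]

/-- A weak order: a reflexive, complete and transitive binary relation. -/
def IsWeakOrder {A : Type*} (r : A → A → Prop) : Prop :=
  Reflexive r ∧ (∀ a b, r a b ∨ r b a) ∧ Transitive r

/-- A social ranking solution maps every weak order on `2^X` to a weak order on `X`. -/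
def IsSRS (R : (Finset X → Finset X → Prop) → X → X → Prop) : Prop :=
  ∀ r, IsWeakOrder r → IsWeakOrder (R r)

/-- `IsClassList r L` : `L = [Σ₁, …, Σ_l]` is the list of the equivalence classes of
the weak order `r` on `2^X`, in strictly decreasing order (`≿ : Σ₁ ≻ ⋯ ≻ Σ_l`):
every class is nonempty, every coalition lies in exactly one class, and
`S ≿ T ↔ i ≤ j` whenever `S ∈ Σᵢ` and `T ∈ Σⱼ` (0-based indices). -/
def IsClassList (r : Finset X → Finset X → Prop) (L : List (Finset (Finset X))) : Prop :=
  (∀ C ∈ L, C.Nonempty) ∧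
  (∀ S : Finset X, ∃! i : ℕ, i < L.length ∧ S ∈ L.getD i ∅) ∧
  (∀ i j : ℕ, i < L.length → j < L.length →
    ∀ S ∈ L.getD i ∅, ∀ T ∈ L.getD j ∅, (r S T ↔ i ≤ j))

/-- The asymmetric (strict) part `P` of a relation. -/
def StrictPart {A : Type*} (p : A → A → Prop) (a b : A) : Prop := p a b ∧ ¬ p b a

/-- The symmetric part `I` (indifference) of a relation. -/
def IndiffPart {A : Type*} (p : A → A → Prop) (a b : A) : Prop := p a b ∧ p b a

/-- The restrictions of `p` and `q` to `{x, y}` coincide. -/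
def AgreeOn (p q : X → X → Prop) (x y : X) : Prop :=
  ∀ a ∈ ({x, y} : Set X), ∀ b ∈ ({x, y} : Set X), (p a b ↔ q a b)

/-- `|Δ[x]|` : the number of coalitions in `Δ` containing `x`. -/
def count (Δ : Finset (Finset X)) (x : X) : ℕ := (Δ.filter (fun S => x ∈ S)).card

/-! ### Independence axioms and further axioms -/

/-- WIVIP: for a dichotomous `≿ : Σ₁ ≻ Σ₂`, any `x ∈ ⋂Σ₁` is socially strictly above
any `y ∉ ⋂Σ₁`. -/
def WIVIP (R : (Finset X → Finset X → Prop) → X → X → Prop) : Prop :=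
  ∀ (r : Finset X → Finset X → Prop) (C₁ C₂ : Finset (Finset X)),
    IsClassList r [C₁, C₂] →
    ∀ x y : X, (∀ S ∈ C₁, x ∈ S) → (∃ S ∈ C₁, y ∉ S) →
    StrictPart (R r) x y

/-- IWS (independence from the worst set): if `≿ : Σ₁ ≻ ⋯ ≻ Σ_{l-1} ≻ Σ_l` (`l ≥ 2`)
and `≿'` is obtained from `≿` by partitioning the worst class `Σ_l` into ordered
classes `Γ₁ ≻' ⋯ ≻' Γ_{l'}`, then `x P_≿ y` implies `x P_≿' y`. -/
def IWS (R : (Finset X → Finset X → Prop) → X → X → Prop) : Prop :=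
  ∀ (r r' : Finset X → Finset X → Prop) (L Γ : List (Finset (Finset X)))
    (W : Finset (Finset X)),
    L ≠ [] → IsClassList r (L ++ [W]) → IsClassList r' (L ++ Γ) →
    ∀ x y : X, StrictPart (R r) x y → StrictPart (R r') x y

/-- IBS (independence from the best set): if `≿ : Σ₁ ≻ Σ₂ ≻ ⋯ ≻ Σ_l` (`l ≥ 2`)
and `≿'` is obtained from `≿` by partitioning the best class `Σ₁` into ordered
classes `Γ₁ ≻' ⋯ ≻' Γ_{l'}`, then `x P_≿ y` implies `x P_≿' y`. -/
def IBS (R : (Finset X → Finset X → Prop) → X → X → Prop) : Prop :=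
  ∀ (r r' : Finset X → Finset X → Prop) (B : Finset (Finset X))
    (L Γ : List (Finset (Finset X))),
    L ≠ [] → IsClassList r (B :: L) → IsClassList r' (Γ ++ L) →
    ∀ x y : X, StrictPart (R r) x y → StrictPart (R r') x y

/-- TO (tops-only): two weak orders with the same best equivalence class get the
same social ranking. -/
def TO (R : (Finset X → Finset X → Prop) → X → X → Prop) : Prop :=
  ∀ (r r' : Finset X → Finset X → Prop) (B : Finset (Finset X))
    (L L' : List (Finset (Finset X))),
    IsClassList r (B :: L) → IsClassList r' (B :: L') → R r = R r'

/-- The class list obtained from `L` by sliding `Δ` out of class `k₁` into class `k₂`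
(`Σ_{k₁}` is replaced by `Σ_{k₁} \ Δ` and `Σ_{k₂}` by `Σ_{k₂} ∪ Δ`; if `Δ = Σ_{k₁}`
the emptied class disappears). -/
def slide (L : List (Finset (Finset X))) (k₁ k₂ : ℕ) (Δ : Finset (Finset X)) :
    List (Finset (Finset X)) :=
  ((L.set k₁ ((L.getD k₁ ∅) \ Δ)).set k₂ ((L.getD k₂ ∅) ∪ Δ)).filter
    (fun C => decide (C ≠ ∅))

/-- SI (slide independence): sliding a proper subfamily `Δ ⊊ Σ_{k₁}` with
`|Δ[x]| = |Δ[y]|` into another class does not change the social ranking on `{x, y}`. -/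
def SI (R : (Finset X → Finset X → Prop) → X → X → Prop) : Prop :=
  ∀ (r r' : Finset X → Finset X → Prop) (L : List (Finset (Finset X)))
    (k₁ k₂ : ℕ) (x y : X) (Δ : Finset (Finset X)),
    IsClassList r L → k₁ < L.length → k₂ < L.length →
    Δ ⊂ L.getD k₁ ∅ → count Δ x = count Δ y →
    IsClassList r' (slide L k₁ k₂ Δ) →
    AgreeOn (R r) (R r') x y

/-- SSI (strong slide independence): as SI, but `Δ ⊆ Σ_{k₁}` may be the whole class
(in which case the class disappears). -/
def SSI (R : (Finset X → Finset X → Prop) → X → X → Prop) : Prop :=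
  ∀ (r r' : Finset X → Finset X → Prop) (L : List (Finset (Finset X)))
    (k₁ k₂ : ℕ) (x y : X) (Δ : Finset (Finset X)),
    IsClassList r L → k₁ < L.length → k₂ < L.length →
    Δ ⊆ L.getD k₁ ∅ → count Δ x = count Δ y →
    IsClassList r' (slide L k₁ k₂ Δ) →
    AgreeOn (R r) (R r') x y

/-- Top-SI: the condition of SI restricted to slides out of the best class (`k₁ = 1`,
i.e. index `0`). -/
def TopSI (R : (Finset X → Finset X → Prop) → X → X → Prop) : Prop :=
  ∀ (r r' : Finset X → Finset X → Prop) (L : List (Finset (Finset X)))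
    (k₂ : ℕ) (x y : X) (Δ : Finset (Finset X)),
    IsClassList r L → 0 < L.length → k₂ < L.length →
    Δ ⊂ L.getD 0 ∅ → count Δ x = count Δ y →
    IsClassList r' (slide L 0 k₂ Δ) →
    AgreeOn (R r) (R r') x y

/-- The class list of `≿' : Σ₁ ≻' ⋯ ≻' Σ_{k-1} ≻' Δ ≻' Σ_k \ Δ ≻' ⋯ ≻' Σ_l`
(empty classes disappear). -/
def inuiList (L : List (Finset (Finset X))) (k : ℕ) (Δ : Finset (Finset X)) :
    List (Finset (Finset X)) :=
  (L.take k ++ [Δ, (L.getD k ∅) \ Δ] ++ L.drop (k + 1)).filter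
    (fun C => decide (C ≠ ∅))

/-- INUI (independence of non-unanimous improvements). -/
def INUI (R : (Finset X → Finset X → Prop) → X → X → Prop) : Prop :=
  ∀ (r r' : Finset X → Finset X → Prop) (L : List (Finset (Finset X)))
    (k : ℕ) (Δ : Finset (Finset X)) (x y : X),
    IsClassList r L → k < L.length → Δ ⊆ L.getD k ∅ →
    (∃ S ∈ Δ, x ∉ S) → (∃ S ∈ Δ, y ∉ S) →
    IsClassList r' (inuiList L k Δ) →
    AgreeOn (R r) (R r') x y

/-- The weak order `≿_π := {(π(S), π(T)) : S ≿ T}` induced by a permutation `π` of `X`. -/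
def permRel (π : Equiv.Perm X) (r : Finset X → Finset X → Prop) :
    Finset X → Finset X → Prop :=
  fun A B => r (A.image π.symm) (B.image π.symm)

/-- NT (neutrality). -/
def NT (R : (Finset X → Finset X → Prop) → X → X → Prop) : Prop :=
  ∀ (π : Equiv.Perm X) (r : Finset X → Finset X → Prop), IsWeakOrder r →
    ∀ x y : X, (R (permRel π r) (π x) (π y) ↔ R r x y)

/-- IIC (independence of irrelevant coalitions). -/
def IIC (R : (Finset X → Finset X → Prop) → X → X → Prop) : Prop :=
  ∀ (r r' : Finset X → Finset X → Prop), IsWeakOrder r → IsWeakOrder r' →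
    ∀ x y : X,
      (∀ S : Finset X, x ∉ S → y ∉ S →
        (r (insert x S) (insert y S) ↔ r' (insert x S) (insert y S))) →
      (R r x y ↔ R r' x y)

/-! ### The social ranking solutions -/

/-- `θ_≿(x) = (|Σ₁[x]|, …, |Σ_l[x]|)`. -/
def theta (L : List (Finset (Finset X))) (x : X) : List ℕ := L.map (fun C => count C x)

/-- The lexicographic order `a ≥^L b` on vectors of naturals. -/
def GeLex (a b : List ℕ) : Prop :=
  a = b ∨ ∃ k < a.length, (∀ j < k, a.getD j 0 = b.getD j 0) ∧ b.getD k 0 < a.getD k 0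

/-- The dual lexicographic order `a ≥^DL b` (read from the last coordinate;
fewer appearances in worse classes is better). -/
def GeDualLex (a b : List ℕ) : Prop :=
  a = b ∨ ∃ k < a.length, (∀ j, k < j → a.getD j 0 = b.getD j 0) ∧ a.getD k 0 < b.getD k 0

/-- The lexicographic excellence solution `R^L` : `x R^L_≿ y ↔ θ_≿(x) ≥^L θ_≿(y)`. -/
def RL (r : Finset X → Finset X → Prop) (x y : X) : Prop :=
  ∀ L, IsClassList r L → GeLex (theta L x) (theta L y)

/-- The dual lexicographic excellence solution `R^DL`. -/
def RDL (r : Finset X → Finset X → Prop) (x y : X) : Prop :=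
  ∀ L, IsClassList r L → GeDualLex (theta L x) (theta L y)

/-- Plurality `R^P` : `x R^P_≿ y ↔ |Σ₁[x]| ≥ |Σ₁[y]|`. -/
def RP (r : Finset X → Finset X → Prop) (x y : X) : Prop :=
  ∀ L, IsClassList r L → count (L.getD 0 ∅) y ≤ count (L.getD 0 ∅) x

/-- `e_≿(x)` : the largest `k` such that `x` belongs to every coalition of each of the
first `k` equivalence classes (`0` if `x ∉ T₁`). -/
def eIIS (L : List (Finset (Finset X))) (x : X) : ℕ :=
  (L.takeWhile (fun C => decide (∀ S ∈ C, x ∈ S))).length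

/-- The intersection initial segment rule `R^IIS` : `x R^IIS_≿ y ↔ e_≿(x) ≥ e_≿(y)`. -/
def RIIS (r : Finset X → Finset X → Prop) (x y : X) : Prop :=
  ∀ L, IsClassList r L → eIIS L y ≤ eIIS L x

/-- The constant-`X` rule: everybody is ranked indifferent. -/
def RconstX : (Finset X → Finset X → Prop) → X → X → Prop := fun _ _ _ => True

/-- The split-plurality score `s^split_≿(z) = ∑_{S ∈ Σ₁ : z ∈ S} 1/|S|`. -/
def splitScore (C : Finset (Finset X)) (z : X) : ℚ :=
  ∑ S ∈ C.filter (fun S => z ∈ S), (1 : ℚ) / (S.card : ℚ)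

/-- Split-plurality `R^splitP`. -/
def RsplitP (r : Finset X → Finset X → Prop) (x y : X) : Prop :=
  ∀ L, IsClassList r L → splitScore (L.getD 0 ∅) y ≤ splitScore (L.getD 0 ∅) x

/-- Plurality with tie-breaking by a linear order `t = ▷` :
`x R^{P,▷}_≿ y ↔ (x P^P_≿ y ∨ (x I^P_≿ y ∧ x ▷ y))`. -/
def RPtie (t : X → X → Prop) (r : Finset X → Finset X → Prop) (x y : X) : Prop :=
  ∀ L, IsClassList r L →
    (count (L.getD 0 ∅) y < count (L.getD 0 ∅) x ∨
      (count (L.getD 0 ∅) x = count (L.getD 0 ∅) y ∧ t x y))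

/-!
Total indifference `≿ : 2^X` ranks all individuals equally, since each lies in the same number of
coalitions. Improving `Δ = {∅, {x}}` gives `≿' : Δ ≻' 2^X \ Δ`, whose best class contains `x` once
and every `y ≠ x` never, so `x` moves strictly above `y`; the coalition `∅ ∈ Δ` makes the
improvement non-unanimous for everybody.
-/

section ClassLists

omit [Fintype X] [DecidableEq X]

variable {r : Finset X → Finset X → Prop} {L M : List (Finset (Finset X))}

theorem lt_length_of_mem_getD {S : Finset X} {i : ℕ} (hS : S ∈ L.getD i ∅) : i < L.length := by
  by_contra hi
  rw [List.getD_eq_default L ∅ (not_lt.mp hi)] at hS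
  exact Finset.notMem_empty S hS

theorem IsClassList.exists_mem_getD (hL : IsClassList r L) (S : Finset X) :
    ∃ i, S ∈ L.getD i ∅ :=
  (hL.2.1 S).exists.imp fun _ h => h.2

theorem IsClassList.getD_nonempty (hL : IsClassList r L) {i : ℕ} (hi : i < L.length) :
    (L.getD i ∅).Nonempty := by
  rw [List.getD_eq_getElem L ∅ hi]
  exact hL.1 _ (L.getElem_mem hi)

theorem IsClassList.index_unique (hL : IsClassList r L) {S : Finset X} {i j : ℕ}
    (hi : S ∈ L.getD i ∅) (hj : S ∈ L.getD j ∅) : i = j :=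
  (hL.2.1 S).unique ⟨lt_length_of_mem_getD hi, hi⟩ ⟨lt_length_of_mem_getD hj, hj⟩

theorem IsClassList.rel_iff_le (hL : IsClassList r L) {S T : Finset X} {i j : ℕ}
    (hS : S ∈ L.getD i ∅) (hT : T ∈ L.getD j ∅) : r S T ↔ i ≤ j :=
  hL.2.2 i j (lt_length_of_mem_getD hS) (lt_length_of_mem_getD hT) S hS T hT

theorem IsClassList.getD_subset_getD (hL : IsClassList r L) (hM : IsClassList r M) (i : ℕ) :
    L.getD i ∅ ⊆ M.getD i ∅ := by
  induction i using Nat.strong_induction_on generalizing L M with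
  | _ i ih =>
    intro S hS
    obtain ⟨j, hSj⟩ := hM.exists_mem_getD S
    rcases lt_trichotomy j i with hji | rfl | hij
    · exact absurd (hL.index_unique (ih j hji hM hL hSj) hS) hji.ne
    · exact hSj
    · -- A member `T` of the `i`-th class of `M` is strictly better than `S`, so its class in `L`
      -- has an index below `i`, where the induction hypothesis applies.
      obtain ⟨T, hT⟩ := hM.getD_nonempty (hij.trans (lt_length_of_mem_getD hSj))
      obtain ⟨k, hTk⟩ := hL.exists_mem_getD T
      have hki : k < i := by
        rw [← not_le, ← hL.rel_iff_le hS hTk, hM.rel_iff_le hSj hT]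
        exact not_le.mpr hij
      exact absurd (hM.index_unique (ih k hki hL hM hTk) hT) hki.ne

theorem IsClassList.length_le_length (hL : IsClassList r L) (hM : IsClassList r M) :
    L.length ≤ M.length := by
  by_contra! hlt
  obtain ⟨S, hS⟩ := hL.getD_nonempty hlt
  exact (lt_length_of_mem_getD (hL.getD_subset_getD hM _ hS)).false

theorem IsClassList.unique (hL : IsClassList r L) (hM : IsClassList r M) : L = M := by
  refine List.ext_getElem ((hL.length_le_length hM).antisymm (hM.length_le_length hL)) ?_
  intro i hi hi'
  rw [← List.getD_eq_getElem L ∅ hi, ← List.getD_eq_getElem M ∅ hi']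
  exact (hL.getD_subset_getD hM i).antisymm (hM.getD_subset_getD hL i)

end ClassLists

section Lexcel

omit [Fintype X]

variable {r : Finset X → Finset X → Prop} {x y : X}

theorem not_geLex_cons_of_lt {a b : ℕ} (hab : a < b) (l m : List ℕ) :
    ¬ GeLex (a :: l) (b :: m) := by
  rintro (heq | ⟨k, -, hagree, hlt⟩)
  · exact hab.ne (List.cons.inj heq).1
  · rcases k.eq_zero_or_pos with rfl | hk
    · exact hab.asymm hlt
    · exact hab.ne (hagree 0 hk)

theorem IsClassList.rl_iff {L : List (Finset (Finset X))} (hL : IsClassList r L) :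
    RL r x y ↔ GeLex (theta L x) (theta L y) :=
  ⟨fun h => h L hL, fun h _ hM => hL.unique hM ▸ h⟩

theorem IsClassList.not_rl_of_count_lt {B : Finset (Finset X)} {L : List (Finset (Finset X))}
    (hL : IsClassList r (B :: L)) (hxy : count B y < count B x) : ¬ RL r y x :=
  fun h => not_geLex_cons_of_lt hxy _ _ (hL.rl_iff.mp h)

end Lexcel

omit [DecidableEq X] in
theorem isClassList_singleton_univ :
    IsClassList (X := X) (fun _ _ => True) [Finset.univ] := by
  refine ⟨by simp, fun S => ⟨0, by simp, by simp⟩, fun i j hi hj _ _ _ _ => ?_⟩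
  simp only [List.length_singleton, Nat.lt_one_iff] at hi hj
  simp [hi, hj]

theorem count_univ_eq_count_univ (x y : X) :
    count Finset.univ x = count Finset.univ y :=
  Finset.card_equiv (Equiv.finsetCongr (Equiv.swap x y)) fun S => by simp

omit [Fintype X] in
theorem rl_of_total_indifference [Finite X] (x y : X) : RL (fun _ _ => True) x y := by
  have := Fintype.ofFinite X
  rw [isClassList_singleton_univ.rl_iff]
  exact .inl (by simp [theta, count_univ_eq_count_univ x y])

section Dichotomy

variable {Δ : Finset (Finset X)}

theorem isClassList_pair_compl (hΔ : Δ.Nonempty) (hΔc : Δᶜ.Nonempty) :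
    IsClassList (fun S T => T ∈ Δ → S ∈ Δ) [Δ, Δᶜ] := by
  refine ⟨by simp [hΔ, hΔc], fun S => ?_, fun i j hi hj S hS T hT => ?_⟩
  · by_cases hS : S ∈ Δ
    · exact ⟨0, by simpa using hS, by rintro (_ | _ | i) ⟨hi, hSi⟩ <;> simp_all⟩
    · exact ⟨1, by simpa using hS, by rintro (_ | _ | i) ⟨hi, hSi⟩ <;> simp_all⟩
  · simp only [List.length_cons, List.length_nil] at hi hj
    interval_cases i <;> interval_cases j <;> simp_all

theorem inuiList_singleton_univ (hΔ : Δ.Nonempty) (hΔc : Δᶜ.Nonempty) :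
    inuiList [Finset.univ] 0 Δ = [Δ, Δᶜ] := by
  simp [inuiList, ← Finset.compl_eq_univ_sdiff, hΔ.ne_empty, hΔc.ne_empty]

end Dichotomy

theorem INUI.rel_iff_of_improve_univ {R : (Finset X → Finset X → Prop) → X → X → Prop}
    (hR : INUI R) {Δ : Finset (Finset X)} (hΔc : Δᶜ.Nonempty) {x y : X}
    (hx : ∃ S ∈ Δ, x ∉ S) (hy : ∃ S ∈ Δ, y ∉ S) :
    R (fun _ _ => True) x y ↔ R (fun S T => T ∈ Δ → S ∈ Δ) x y := by
  have hΔ : Δ.Nonempty := hx.imp fun _ h => h.1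
  exact hR _ _ [Finset.univ] 0 Δ x y isClassList_singleton_univ (by simp) (by simp) hx hy
    (inuiList_singleton_univ hΔ hΔc ▸ isClassList_pair_compl hΔ hΔc) x (by simp) y (by simp)

omit [Fintype X] in
theorem lexcel_not_inui_general [Finite X] [Nontrivial X] : ¬ INUI (X := X) RL := by
  have := Fintype.ofFinite X
  intro hINUI
  obtain ⟨x, y, hxy⟩ := exists_pair_ne X
  let Δ : Finset (Finset X) := {∅, {x}}
  have hΔ : Δ.Nonempty := ⟨∅, by simp [Δ]⟩
  have hΔc : Δᶜ.Nonempty := ⟨{y}, by simp [Δ, hxy.symm]⟩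
  have hcount : count Δ y < count Δ x := by
    simp [Δ, count, Finset.filter_insert, Finset.filter_singleton, hxy.symm]
  have hnot : ¬ RL (fun S T => T ∈ Δ → S ∈ Δ) y x :=
    (isClassList_pair_compl hΔ hΔc).not_rl_of_count_lt hcount
  have hnonunanimous (z : X) : ∃ S ∈ Δ, z ∉ S := ⟨∅, by simp [Δ]⟩
  exact hnot <| (hINUI.rel_iff_of_improve_univ hΔc (hnonunanimous y) (hnonunanimous x)).mp
    (rl_of_total_indifference y x)

/-- If `|X| ≥ 3`, the lexicographic excellence solution does not satisfy INUI. -/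
theorem lexcel_not_inui (hX : 3 ≤ Fintype.card X) :
    ¬ INUI (X := X) RL :=
  have : Nontrivial X := Fintype.one_lt_card_iff_nontrivial.mp (by omega)
  lexcel_not_inui_general

end SocialRanking
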